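/- If a quadruple (V₁, H, a, b) in Σ admits an admissible flag 0 = V₀ ⊂ V₁ ⊂ ⋯ ⊂ V_k of level k and an admissible flag 0 = W₀ ⊂ W₁ ⊂ ⋯ ⊂ W_{k′} of level k′, then k = k′ and V_j = W_j for all j; in other words, each map π_k is injective and the images π_k(Σ̃_k), k = 1, …, d, are pairwise disjoint, so that together with the covering statement they form a partition of Σ into d pieces. -/

import Mathlib

/-- §10.3: an admissible flag of level `k` for a quadruple `(V₁, H, a, b)`:
a chain `⊥ = W 0 ⊂ W 1 = V₁ ⊂ ⋯ ⊂ W k` with `dim (W j) = j`, such that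
`W (k-1) = W k ⊓ H` and for `1 ≤ j ≤ k` the image of the subspace `W j / V₁` of
`V/V₁` under `b` equals `W (j-1)`, regarded as a subspace of `H`. -/
def IsAdmissibleFlag103 (𝕜 : Type*) [Field 𝕜] (V : Type*) [AddCommGroup V] [Module 𝕜 V]
    (V₁ H : Submodule 𝕜 V) (b : (V ⧸ V₁) ≃ₗ[𝕜] H)
    (k : ℕ) (W : ℕ → Submodule 𝕜 V) : Prop :=
  W 0 = ⊥ ∧ W 1 = V₁ ∧
  (∀ j ≤ k, Module.finrank 𝕜 (W j) = j) ∧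
  (∀ j < k, W j ≤ W (j + 1)) ∧
  W (k - 1) = W k ⊓ H ∧
  (∀ j, 1 ≤ j → j ≤ k →
    (((W j).map V₁.mkQ).map b.toLinearMap).map H.subtype = W (j - 1))

/-!
Composing `V → V/V₁`, `b` and `H ⊆ V` gives an endomorphism `f` of `V` with kernel `V₁` and
range `H`. An admissible flag satisfies `f (W (j + 1)) = W j` and `V₁ ≤ W (j + 1)`, which forces
`W j = ker (f ^ j)`. The level is then the first `j` with `ker (f ^ j)` not contained in `H`:
below the level, `W j` is an image under `f`, while at the level `W k ⊓ H = W (k - 1)` is too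
small to be `W k`.
-/

section Module

variable {R M : Type*} [Ring R] [AddCommGroup M] [Module R M]

theorem eq_ker_pow_of_map_succ_eq {f : Module.End R M} {k : ℕ} {W : ℕ → Submodule R M}
    (zero : W 0 = ⊥) (ker_le : ∀ j < k, LinearMap.ker f ≤ W (j + 1))
    (map_succ : ∀ j < k, (W (j + 1)).map f = W j) {j : ℕ} (hj : j ≤ k) :
    W j = LinearMap.ker (f ^ j) := by
  induction j with
  | zero => rw [zero, pow_zero, Module.End.one_eq_id, LinearMap.ker_id]
  | succ j ih =>
    calc W (j + 1) = ((W (j + 1)).map f).comap f :=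
          (Submodule.comap_map_eq_self (ker_le j hj)).symm
      _ = (LinearMap.ker (f ^ j)).comap f := by rw [map_succ j hj, ih (Nat.le_of_succ_le hj)]
      _ = LinearMap.ker (f ^ (j + 1)) := by
          rw [pow_succ, Module.End.mul_eq_comp, LinearMap.ker_comp]

/-- The endomorphism `M → M ⧸ P ≃ H ⊆ M` attached to an isomorphism `b` from a quotient of `M`
to a submodule of `M`. It has kernel `P` and range `H`, and its powers make sense, unlike those
of `b`. -/
def endOfQuotientEquiv {P H : Submodule R M} (b : (M ⧸ P) ≃ₗ[R] H) : Module.End R M :=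
  H.subtype ∘ₗ b.toLinearMap ∘ₗ P.mkQ

variable {P H : Submodule R M} (b : (M ⧸ P) ≃ₗ[R] H)

theorem ker_endOfQuotientEquiv : LinearMap.ker (endOfQuotientEquiv b) = P := by
  rw [endOfQuotientEquiv, LinearMap.ker_comp_of_ker_eq_bot _ H.ker_subtype,
    LinearEquiv.ker_comp, Submodule.ker_mkQ]

theorem range_endOfQuotientEquiv : LinearMap.range (endOfQuotientEquiv b) = H := by
  rw [endOfQuotientEquiv, LinearMap.range_comp, LinearMap.range_comp, Submodule.range_mkQ,
    Submodule.map_top, LinearEquiv.range, Submodule.map_subtype_top]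

theorem map_endOfQuotientEquiv (N : Submodule R M) :
    N.map (endOfQuotientEquiv b) = ((N.map P.mkQ).map b.toLinearMap).map H.subtype := by
  rw [endOfQuotientEquiv, Submodule.map_comp, Submodule.map_comp]

end Module

namespace IsAdmissibleFlag103

variable {𝕜 V : Type*} [Field 𝕜] [AddCommGroup V] [Module 𝕜 V] {V₁ H : Submodule 𝕜 V}
  {b : (V ⧸ V₁) ≃ₗ[𝕜] H} {j k k' : ℕ} {W W' : ℕ → Submodule 𝕜 V}

theorem line_le_succ (hW : IsAdmissibleFlag103 𝕜 V V₁ H b k W) (hj : j < k) : V₁ ≤ W (j + 1) := by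
  obtain ⟨-, one_eq, -, mono, -, -⟩ := hW
  induction j with
  | zero => exact one_eq.ge
  | succ j ih => exact (ih (Nat.lt_of_succ_lt hj)).trans (mono (j + 1) hj)

theorem map_succ (hW : IsAdmissibleFlag103 𝕜 V V₁ H b k W) (hj : j < k) :
    (W (j + 1)).map (endOfQuotientEquiv b) = W j := by
  obtain ⟨-, -, -, -, -, image⟩ := hW
  rw [map_endOfQuotientEquiv]
  exact image (j + 1) j.succ_pos hj

theorem eq_ker_pow (hW : IsAdmissibleFlag103 𝕜 V V₁ H b k W) (hj : j ≤ k) :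
    W j = LinearMap.ker (endOfQuotientEquiv b ^ j) :=
  eq_ker_pow_of_map_succ_eq hW.1
    (fun _ hi => (ker_endOfQuotientEquiv b).trans_le (hW.line_le_succ hi))
    (fun _ hi => hW.map_succ hi) hj

theorem le_hyperplane_of_lt (hW : IsAdmissibleFlag103 𝕜 V V₁ H b k W) (hj : j < k) : W j ≤ H :=
  calc W j = (W (j + 1)).map (endOfQuotientEquiv b) := (hW.map_succ hj).symm
    _ ≤ LinearMap.range (endOfQuotientEquiv b) := LinearMap.map_le_range
    _ = H := range_endOfQuotientEquiv b

theorem not_le_hyperplane (hW : IsAdmissibleFlag103 𝕜 V V₁ H b k W) (hk : 1 ≤ k) : ¬ W k ≤ H := by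
  intro le_H
  obtain ⟨-, -, finrank_eq, -, inf_eq, -⟩ := hW
  have pred_eq : W (k - 1) = W k := inf_eq.trans (inf_eq_left.2 le_H)
  have finrank_pred := finrank_eq (k - 1) (k.sub_le 1)
  rw [pred_eq, finrank_eq k le_rfl] at finrank_pred
  lia

theorem level_le (hW : IsAdmissibleFlag103 𝕜 V V₁ H b k W)
    (hW' : IsAdmissibleFlag103 𝕜 V V₁ H b k' W') (hk : 1 ≤ k) : k' ≤ k := by
  by_contra! hlt
  have agree : W k = W' k := (hW.eq_ker_pow le_rfl).trans (hW'.eq_ker_pow hlt.le).symm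
  exact hW.not_le_hyperplane hk (agree.trans_le (hW'.le_hyperplane_of_lt hlt))

end IsAdmissibleFlag103

theorem uniqueness_10_3_general {𝕜 V : Type*} [Field 𝕜] [AddCommGroup V] [Module 𝕜 V]
    {V₁ H : Submodule 𝕜 V} {b : (V ⧸ V₁) ≃ₗ[𝕜] H} {k k' : ℕ} (hk : 1 ≤ k) (hk' : 1 ≤ k')
    {W W' : ℕ → Submodule 𝕜 V} (hW : IsAdmissibleFlag103 𝕜 V V₁ H b k W)
    (hW' : IsAdmissibleFlag103 𝕜 V V₁ H b k' W') :
    k = k' ∧ ∀ j ≤ k, W j = W' j := by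
  obtain rfl : k = k' := le_antisymm (hW'.level_le hW hk') (hW.level_le hW' hk)
  exact ⟨rfl, fun j hj => (hW.eq_ker_pow hj).trans (hW'.eq_ker_pow hj).symm⟩

/-- Uniqueness: if `(V₁, H, a, b)` admits an admissible flag of level `k` and one of
level `k'`, then `k = k'` and the two flags agree; i.e. each `π_k` is injective and the
images `π_k(Σ̃_k)` are pairwise disjoint. -/
theorem uniqueness_10_3 (𝕜 : Type*) [Field 𝕜] [IsAlgClosed 𝕜]
    (V : Type*) [AddCommGroup V] [Module 𝕜 V] [FiniteDimensional 𝕜 V]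
    (d : ℕ) (hd : 2 ≤ d) (hdim : Module.finrank 𝕜 V = d)
    (V₁ H : Submodule 𝕜 V)
    (hV₁ : Module.finrank 𝕜 V₁ = 1) (hH : Module.finrank 𝕜 H = d - 1)
    (a : V₁ ≃ₗ[𝕜] (V ⧸ H)) (b : (V ⧸ V₁) ≃ₗ[𝕜] H)
    (k k' : ℕ) (hk : 1 ≤ k) (hkd : k ≤ d) (hk' : 1 ≤ k') (hk'd : k' ≤ d)
    (W W' : ℕ → Submodule 𝕜 V)
    (hW : IsAdmissibleFlag103 𝕜 V V₁ H b k W)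
    (hW' : IsAdmissibleFlag103 𝕜 V V₁ H b k' W') :
    k = k' ∧ ∀ j ≤ k, W j = W' j :=
  uniqueness_10_3_general hk hk' hW hW'
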